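/- Let G be a group with finite generating set and word metric, of type FP_m. Then Σ^m(G;ℤ) is an open cone in Hom(G,ℝ): the set {χ ∈ Hom(G,ℝ) : χ ≠ 0 and χ ∈ Σ^m(G;ℤ)} is open in Hom(G,ℝ) with the topology of pointwise convergence, and for every real λ > 0 and every character χ, one has χ ∈ Σ^m(G;ℤ) if and only if λχ ∈ Σ^m(G;ℤ). -/

import Mathlib

open Finsupp

variable {G : Type*} [Group G]

/-- Word length with respect to a generating set `X`. -/
noncomputable def wordLength (X : Finset G) (g : G) : ℕ :=
  sInf {n : ℕ | ∃ w : List G, w.length = n ∧ (∀ x ∈ w, x ∈ X ∨ x⁻¹ ∈ X) ∧ w.prod = g}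

/-- The left-invariant word metric `d(g,h) = l(g⁻¹h)`. -/
noncomputable def wordDist (X : Finset G) (g h : G) : ℕ :=
  wordLength X (g⁻¹ * h)

/-- `c` is a chain in `C_q^k(S)`: its support consists of `(q+1)`-tuples of elements of `S`
that are pairwise at distance at most `k`. -/
def VRChain (X : Finset G) (S : Set G) (q k : ℕ) (c : (Fin (q + 1) → G) →₀ ℤ) : Prop :=
  ∀ σ ∈ c.support, (∀ i, σ i ∈ S) ∧ ∀ i j, wordDist X (σ i) (σ j) ≤ k

/-- The simplicial boundary map `∂_{q+1} : ℤ[G^{q+2}] → ℤ[G^{q+1}]`. -/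
noncomputable def bnd (q : ℕ) :
    ((Fin (q + 2) → G) →₀ ℤ) →ₗ[ℤ] ((Fin (q + 1) → G) →₀ ℤ) :=
  Finsupp.lift _ ℤ _
    (fun σ => ∑ i : Fin (q + 2), ((-1 : ℤ) ^ (i : ℕ)) • Finsupp.single (σ ∘ i.succAbove) (1 : ℤ))

/-- The augmentation `ε : ℤ[G] → ℤ` sending every vertex to `1`. -/
noncomputable def aug : ((Fin 1 → G) →₀ ℤ) →ₗ[ℤ] ℤ :=
  Finsupp.lift ℤ ℤ (Fin 1 → G) (fun _ => (1 : ℤ))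

/-- Reduced `q`-cycles at scale `k` on `S` bound at scale `l` on `S`. -/
def BoundsAt (X : Finset G) (S : Set G) : ℕ → ℕ → ℕ → Prop
  | 0, k, l => ∀ z : (Fin 1 → G) →₀ ℤ, VRChain X S 0 k z → aug z = 0 →
      ∃ c : (Fin 2 → G) →₀ ℤ, VRChain X S 1 l c ∧ bnd 0 c = z
  | (q + 1), k, l => ∀ z : (Fin (q + 2) → G) →₀ ℤ, VRChain X S (q + 1) k z → bnd q z = 0 →
      ∃ c : (Fin (q + 3) → G) →₀ ℤ, VRChain X S (q + 2) l c ∧ bnd (q + 1) c = z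

/-- `S ⊆ G` is of type `FP_m`. -/
def TypeFP (X : Finset G) (S : Set G) (m : ℕ) : Prop :=
  ∀ q < m, ∀ k : ℕ, ∃ l ≥ k, BoundsAt X S q k l

/-- A character on `G` is a homomorphism to the additive reals. -/
def IsCharacter (χ : G → ℝ) : Prop :=
  ∀ g h : G, χ (g * h) = χ g + χ h

/-- Simultaneous left translation on chains, making `ℤ[G^{q+1}]` a `ℤG`-module. -/
noncomputable def lTranslate (g : G) (q : ℕ) :
    ((Fin (q + 1) → G) →₀ ℤ) →ₗ[ℤ] ((Fin (q + 1) → G) →₀ ℤ) :=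
  Finsupp.lmapDomain ℤ ℤ (fun σ i => g * σ i)

/-- A chain endomorphism of `ℤG`-complexes on `(C_q^k(G))_{q=0,…,m}` extending the identity
on `ℤ`: each `φ q` maps scale-`k` chains to scale-`k` chains, is `G`-equivariant,
satisfies `ε ∘ φ₀ = ε` and commutes with the boundary maps. -/
def IsChainEndo (X : Finset G) (k m : ℕ)
    (φ : ∀ q : ℕ, ((Fin (q + 1) → G) →₀ ℤ) →ₗ[ℤ] ((Fin (q + 1) → G) →₀ ℤ)) : Prop :=
  (∀ q ≤ m, ∀ c, VRChain X Set.univ q k c → VRChain X Set.univ q k (φ q c)) ∧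
  (∀ q ≤ m, ∀ (g : G) (c), VRChain X Set.univ q k c →
    φ q (lTranslate g q c) = lTranslate g q (φ q c)) ∧
  (∀ c : (Fin 1 → G) →₀ ℤ, VRChain X Set.univ 0 k c → aug (φ 0 c) = aug c) ∧
  (∀ q : ℕ, q + 1 ≤ m → ∀ c : (Fin (q + 2) → G) →₀ ℤ, VRChain X Set.univ (q + 1) k c →
    bnd q (φ (q + 1) c) = φ q (bnd q c))

/-- The valuation of a simplex: `v(σ) = min_i χ(g_i)` (with values in `EReal`). -/
noncomputable def vsimp (χ : G → ℝ) {q : ℕ} (σ : Fin (q + 1) → G) : EReal :=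
  ⨅ i, (χ (σ i) : EReal)

/-- The valuation of a chain: the minimum of the valuations of the simplices in its support
(`⊤` for the zero chain). -/
noncomputable def vchain (χ : G → ℝ) {q : ℕ} (c : (Fin (q + 1) → G) →₀ ℤ) : EReal :=
  ⨅ σ ∈ c.support, vsimp χ σ

/-!
Suppose `χ ≠ 0` lies in `Σ^m(G;ℤ)`. Translating by a power of an element with `χ > 0`, cycles in
any half space `{χ ≥ r}` can be filled with a loss of height that does not depend on `r`. Right
multiplication by an element `t` is a map of vertices raising `χ` by `χ t`; filling degree by
degree extends it to a `ℤG`-chain map which, for `χ t` large, still raises `χ` by a definite amount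
up to degree `m`, with values at a scale `κ` that depends neither on `t` nor on the source scale.
By equivariance this is a condition on finitely many group elements, so the chain map raises every
nearby character `χ'` as well. Iterating it moves a filling in `G` of a cycle in `{χ' ≥ 0}` into
`{χ' ≥ 0}`; the cycle itself is moved within `{χ' ≥ 0}`, and cone homotopies bring it back at a
scale that does not depend on the number of iterations.
-/

/-! ### Chains and simplices -/

/-- The group of `q`-chains on a vertex set `V`, with no bound on the scale. -/
abbrev Chain (V : Type*) (q : ℕ) := (Fin (q + 1) → V) →₀ ℤ

/-- The `q`-chains all of whose vertices lie in `S`. -/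
noncomputable def chainsOn {V : Type*} (S : Set V) (q : ℕ) : Submodule ℤ (Chain V q) :=
  supported ℤ ℤ {σ | ∀ i, σ i ∈ S}

/-- The `q`-simplices of the Vietoris–Rips complex of `G` at scale `k`. -/
def ripsSimplices (X : Finset G) (q k : ℕ) : Set (Fin (q + 1) → G) :=
  {σ | ∀ i j, wordDist X (σ i) (σ j) ≤ k}

/-- The chain group `C_q^k(G)` as a subgroup of the group of all `q`-chains. -/
noncomputable def chainsOfScale (X : Finset G) (q k : ℕ) : Submodule ℤ (Chain G q) :=
  supported ℤ ℤ (ripsSimplices X q k)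

/-- The chain group `C_q^k(S)` as a subgroup of the group of all `q`-chains. -/
noncomputable def ripsChains (X : Finset G) (S : Set G) (q k : ℕ) : Submodule ℤ (Chain G q) :=
  chainsOn S q ⊓ chainsOfScale X q k

/-- The cycles of the augmented complex of all chains on `V`. -/
noncomputable def reducedCycles (V : Type*) : ∀ q : ℕ, Submodule ℤ (Chain V q)
  | 0 => LinearMap.ker aug
  | q + 1 => LinearMap.ker (bnd q)

/-- Equivariance under left translation of a homomorphism between chain groups. -/
def Equivariant {p q : ℕ} (F : Chain G p →ₗ[ℤ] Chain G q) : Prop :=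
  ∀ g c, F (lTranslate g p c) = lTranslate g q (F c)

theorem supported_le_comap {α R M : Type*} [Semiring R] [AddCommMonoid M] [Module R M]
    {s : Set α} {F : (α →₀ R) →ₗ[R] M} {N : Submodule R M}
    (h : ∀ a ∈ s, F (single a 1) ∈ N) : supported R R s ≤ N.comap F := by
  rw [supported_eq_span_single, Submodule.span_le]
  rintro _ ⟨a, ha, rfl⟩
  exact h a ha

theorem single_mem_supported_iff {α R : Type*} [Semiring R] [Nontrivial R] {s : Set α} {a : α} :
    single a (1 : R) ∈ supported R R s ↔ a ∈ s := by
  simp [mem_supported]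

theorem linearMap_eq_of_forall_single {α R M : Type*} [Semiring R] [AddCommMonoid M] [Module R M]
    {F F' : (α →₀ R) →ₗ[R] M} (h : ∀ a, F (single a 1) = F' (single a 1)) : F = F' :=
  lhom_ext' fun a => LinearMap.ext_ring (h a)

section Boundary

variable {V : Type*}

theorem bnd_single (q : ℕ) (σ : Fin (q + 2) → V) :
    bnd q (single σ 1) = ∑ i : Fin (q + 2), ((-1 : ℤ) ^ (i : ℕ)) • single (σ ∘ i.succAbove) 1 := by
  simp [bnd]

theorem aug_single (σ : Fin 1 → V) : aug (single σ 1) = 1 := by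
  simp [aug]

/-- The cone operator with apex `v`, which adjoins `v` to every simplex as its first vertex. -/
noncomputable def cone (v : V) (q : ℕ) : Chain V q →ₗ[ℤ] Chain V (q + 1) :=
  lmapDomain ℤ ℤ fun σ => Fin.cons v σ

theorem cone_single (v : V) {q : ℕ} (σ : Fin (q + 1) → V) :
    cone v q (single σ 1) = single (Fin.cons v σ : Fin (q + 2) → V) 1 := by
  simp [cone]

theorem bnd_cone_zero (v : V) (c : Chain V 0) :
    bnd 0 (cone v 0 c) = c - aug c • single (fun _ => v) 1 := by
  refine LinearMap.congr_fun (f := bnd 0 ∘ₗ cone v 0)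
    (g := LinearMap.id - aug.smulRight (single (fun _ => v) 1))
    (linearMap_eq_of_forall_single fun σ => ?_) c
  have last_face : (Fin.cons v σ : Fin 2 → V) ∘ Fin.succAbove 1 = fun _ => v := by
    ext i; fin_cases i; rfl
  simp [cone_single, bnd_single, Fin.sum_univ_two, last_face, aug_single, sub_eq_add_neg]

theorem bnd_cone_succ (v : V) {q : ℕ} (c : Chain V (q + 1)) :
    bnd (q + 1) (cone v (q + 1) c) = c - cone v q (bnd q c) := by
  refine LinearMap.congr_fun (f := bnd (q + 1) ∘ₗ cone v (q + 1))
    (g := LinearMap.id - cone v q ∘ₗ bnd q) (linearMap_eq_of_forall_single fun σ => ?_) c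
  have base_face : (Fin.cons v σ : Fin (q + 3) → V) ∘ Fin.succAbove 0 = σ := by
    ext i; simp
  have side_face (j : Fin (q + 2)) : (Fin.cons v σ : Fin (q + 3) → V) ∘ Fin.succAbove j.succ =
      Fin.cons v (σ ∘ j.succAbove) := by
    ext i; cases i using Fin.cases <;> simp
  simp only [LinearMap.comp_apply, LinearMap.sub_apply, LinearMap.id_apply, cone_single,
    bnd_single, Fin.sum_univ_succ (n := q + 2), base_face, side_face, map_sum, map_smul]
  simp [pow_succ, sub_eq_add_neg]

theorem bnd_cone_of_mem_reducedCycles (v : V) {q : ℕ} {z : Chain V q}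
    (hz : z ∈ reducedCycles V q) : bnd q (cone v q z) = z := by
  cases q with
  | zero =>
    have aug_z : aug z = 0 := hz
    rw [bnd_cone_zero, aug_z, zero_smul, sub_zero]
  | succ q =>
    have bnd_z : bnd q z = 0 := hz
    rw [bnd_cone_succ, bnd_z, map_zero, sub_zero]

theorem bnd_mem_reducedCycles {q : ℕ} (c : Chain V (q + 1)) : bnd q c ∈ reducedCycles V q := by
  induction q with
  | zero =>
    refine LinearMap.congr_fun (f := aug ∘ₗ bnd 0) (g := 0)
      (linearMap_eq_of_forall_single fun σ => ?_) c
    simp [bnd_single, Fin.sum_univ_two, aug_single]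
  | succ q ih =>
    refine LinearMap.congr_fun (f := bnd q ∘ₗ bnd (q + 1)) (g := 0)
      (linearMap_eq_of_forall_single fun σ => ?_) c
    have σ_eq_cone : single σ (1 : ℤ) = cone (σ 0) (q + 1) (single (Fin.tail σ) 1) := by
      rw [cone_single, Fin.cons_self_tail]
    rw [LinearMap.comp_apply, σ_eq_cone, bnd_cone_succ, map_sub,
      bnd_cone_of_mem_reducedCycles _ (ih _), sub_self, LinearMap.zero_apply]

theorem cone_mem_chainsOn {S : Set V} {q : ℕ} {c : Chain V q} {v : V} (hv : v ∈ S)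
    (hc : c ∈ chainsOn S q) : cone v q c ∈ chainsOn S (q + 1) := by
  refine supported_le_comap (N := chainsOn S (q + 1)) (fun σ hσ => ?_) hc
  rw [cone_single, chainsOn, single_mem_supported_iff]
  exact Fin.cases hv hσ

end Boundary

section Translation

theorem lTranslate_single (g : G) {q : ℕ} (σ : Fin (q + 1) → G) :
    lTranslate g q (single σ 1) = single (g • σ) 1 := by
  rw [lTranslate, lmapDomain_apply, mapDomain_single]
  rfl

theorem lTranslate_mul (g h : G) {q : ℕ} (c : Chain G q) :
    lTranslate (g * h) q c = lTranslate g q (lTranslate h q c) := by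
  refine LinearMap.congr_fun (g := lTranslate g q ∘ₗ lTranslate h q)
    (linearMap_eq_of_forall_single fun σ => ?_) c
  simp only [LinearMap.comp_apply, lTranslate_single, mul_smul]

theorem lTranslate_one {q : ℕ} (c : Chain G q) : lTranslate 1 q c = c := by
  refine LinearMap.congr_fun (g := LinearMap.id) (linearMap_eq_of_forall_single fun σ => ?_) c
  simp only [lTranslate_single, one_smul, LinearMap.id_apply]

theorem mem_support_lTranslate_iff {g : G} {q : ℕ} {c : Chain G q} {σ : Fin (q + 1) → G} :
    g • σ ∈ (lTranslate g q c).support ↔ σ ∈ c.support := by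
  have value : lTranslate g q c (g • σ) = c σ :=
    mapDomain_apply (f := fun σ : Fin (q + 1) → G => g • σ) (MulAction.injective g) c σ
  rw [mem_support_iff, mem_support_iff, value]

theorem equivariant_bnd (q : ℕ) : Equivariant (bnd (G := G) q) := by
  refine fun g => LinearMap.congr_fun (f := bnd q ∘ₗ lTranslate g (q + 1))
    (g := lTranslate g q ∘ₗ bnd q) (linearMap_eq_of_forall_single fun σ => ?_)
  simp only [LinearMap.comp_apply, lTranslate_single, bnd_single, map_sum, map_smul]
  rfl

theorem aug_lTranslate (g : G) (c : Chain G 0) : aug (lTranslate g 0 c) = aug c := by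
  refine LinearMap.congr_fun (f := aug ∘ₗ lTranslate g 0)
    (linearMap_eq_of_forall_single fun σ => ?_) c
  rw [LinearMap.comp_apply, lTranslate_single, aug_single, aug_single]

theorem lTranslate_cone (g v : G) {q : ℕ} (c : Chain G q) :
    lTranslate g (q + 1) (cone v q c) = cone (g * v) q (lTranslate g q c) := by
  refine LinearMap.congr_fun (f := lTranslate g (q + 1) ∘ₗ cone v q)
    (g := cone (g * v) q ∘ₗ lTranslate g q) (linearMap_eq_of_forall_single fun σ => ?_) c
  simp only [LinearMap.comp_apply, lTranslate_single, cone_single]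
  congr 1
  ext i
  cases i using Fin.cases <;> simp

theorem lTranslate_mem_reducedCycles (g : G) {q : ℕ} {z : Chain G q}
    (hz : z ∈ reducedCycles G q) : lTranslate g q z ∈ reducedCycles G q := by
  cases q with
  | zero => exact (aug_lTranslate g z).trans hz
  | succ q =>
    have bnd_z : bnd q z = 0 := hz
    change bnd q _ = 0
    rw [equivariant_bnd, bnd_z, map_zero]

theorem equivariant_id {q : ℕ} : Equivariant (LinearMap.id : Chain G q →ₗ[ℤ] Chain G q) :=
  fun _ _ => rfl

theorem Equivariant.comp {p q r : ℕ} {F : Chain G q →ₗ[ℤ] Chain G r}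
    {F' : Chain G p →ₗ[ℤ] Chain G q} (hF : Equivariant F) (hF' : Equivariant F') :
    Equivariant (F ∘ₗ F') := fun g c => by
  rw [LinearMap.comp_apply, hF', hF, LinearMap.comp_apply]

theorem Equivariant.sub {p q : ℕ} {F F' : Chain G p →ₗ[ℤ] Chain G q} (hF : Equivariant F)
    (hF' : Equivariant F') : Equivariant (F - F') := fun g c => by
  rw [LinearMap.sub_apply, hF, hF', LinearMap.sub_apply, map_sub]

theorem exists_equivariant_forall_single {p q : ℕ} {P : (Fin (p + 1) → G) → Chain G q → Prop}
    (hP : ∀ g σ c, P σ c → P (g • σ) (lTranslate g q c)) (h : ∀ σ, ∃ c, P σ c) :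
    ∃ F : Chain G p →ₗ[ℤ] Chain G q, Equivariant F ∧ ∀ σ, P σ (F (single σ 1)) := by
  choose e he using h
  -- `{σ | σ 0 = 1}` is a set of representatives for the free action of `G` on simplices.
  let F : Chain G p →ₗ[ℤ] Chain G q :=
    Finsupp.lift _ ℤ _ fun σ => lTranslate (σ 0) q (e ((σ 0)⁻¹ • σ))
  have F_single (σ) : F (single σ 1) = lTranslate (σ 0) q (e ((σ 0)⁻¹ • σ)) := by simp [F]
  refine ⟨F, fun g => LinearMap.congr_fun (f := F ∘ₗ lTranslate g p) (g := lTranslate g q ∘ₗ F)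
    (linearMap_eq_of_forall_single fun σ => ?_), fun σ => ?_⟩
  · have normalized : ((g • σ) 0)⁻¹ • g • σ = (σ 0)⁻¹ • σ := by
      rw [smul_smul, Pi.smul_apply, smul_eq_mul, mul_inv_rev, inv_mul_cancel_right]
    rw [LinearMap.comp_apply, LinearMap.comp_apply, lTranslate_single, F_single, F_single,
      normalized, Pi.smul_apply, smul_eq_mul, lTranslate_mul]
  · simpa only [F_single, smul_inv_smul] using hP (σ 0) _ _ (he ((σ 0)⁻¹ • σ))

end Translation

/-! ### Scales -/

section Scale

variable {X : Finset G} {S T : Set G} {q k l : ℕ}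

theorem wordDist_mul_left (g a b : G) : wordDist X (g * a) (g * b) = wordDist X a b := by
  simp only [wordDist, mul_inv_rev, mul_assoc, inv_mul_cancel_left]

theorem wordDist_self (g : G) : wordDist X g g = 0 := by
  rw [wordDist, wordLength, Nat.sInf_eq_zero]
  exact Or.inl ⟨[], rfl, by simp, by simp⟩

theorem smul_mem_ripsSimplices {σ : Fin (q + 1) → G} (g : G) (hσ : σ ∈ ripsSimplices X q k) :
    g • σ ∈ ripsSimplices X q k :=
  fun i j => (wordDist_mul_left g _ _).trans_le (hσ i j)

theorem chainsOn_mono {V : Type*} {S T : Set V} (hST : S ⊆ T) (q : ℕ) :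
    chainsOn S q ≤ chainsOn T q :=
  supported_mono fun _ hσ i => hST (hσ i)

theorem chainsOfScale_mono (hkl : k ≤ l) : chainsOfScale X q k ≤ chainsOfScale X q l :=
  supported_mono fun _ hσ i j => (hσ i j).trans hkl

theorem ripsChains_mono (hST : S ⊆ T) (hkl : k ≤ l) : ripsChains X S q k ≤ ripsChains X T q l :=
  inf_le_inf (chainsOn_mono hST q) (chainsOfScale_mono hkl)

theorem ripsChains_eq_supported :
    ripsChains X S q k = supported ℤ ℤ ({σ | ∀ i, σ i ∈ S} ∩ ripsSimplices X q k) :=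
  (supported_inter _ _).symm

theorem vrChain_iff {c : Chain G q} : VRChain X S q k c ↔ c ∈ ripsChains X S q k := by
  rw [ripsChains_eq_supported]
  rfl

theorem single_mem_ripsChains {σ : Fin (q + 1) → G} :
    single σ 1 ∈ ripsChains X S q k ↔ (∀ i, σ i ∈ S) ∧ σ ∈ ripsSimplices X q k := by
  rw [ripsChains_eq_supported, single_mem_supported_iff]
  rfl

theorem ripsChains_le_comap {M : Type*} [AddCommGroup M] {N : Submodule ℤ M}
    {F : Chain G q →ₗ[ℤ] M} (h : ∀ σ, single σ 1 ∈ ripsChains X S q k → F (single σ 1) ∈ N) :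
    ripsChains X S q k ≤ N.comap F := by
  rw [ripsChains_eq_supported]
  exact supported_le_comap fun σ hσ => h σ (single_mem_ripsChains.2 hσ)

theorem bnd_mem_ripsChains {c : Chain G (q + 1)} (hc : c ∈ ripsChains X S (q + 1) k) :
    bnd q c ∈ ripsChains X S q k := by
  refine ripsChains_le_comap (N := ripsChains X S q k) (fun σ hσ => ?_) hc
  rw [single_mem_ripsChains] at hσ
  rw [bnd_single]
  exact Submodule.sum_mem _ fun i _ => Submodule.smul_mem _ _
    (single_mem_ripsChains.2 ⟨fun j => hσ.1 _, fun j j' => hσ.2 _ _⟩)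

theorem lTranslate_mem_chainsOfScale (g : G) {c : Chain G q} (hc : c ∈ chainsOfScale X q k) :
    lTranslate g q c ∈ chainsOfScale X q k := by
  refine supported_le_comap (N := chainsOfScale X q k) (fun σ hσ => ?_) hc
  rw [lTranslate_single, chainsOfScale, single_mem_supported_iff]
  exact smul_mem_ripsSimplices g hσ

theorem lTranslate_mem_chainsOn {g : G} (hg : ∀ s ∈ S, g * s ∈ T) {c : Chain G q}
    (hc : c ∈ chainsOn S q) : lTranslate g q c ∈ chainsOn T q := by
  refine supported_le_comap (N := chainsOn T q) (fun σ hσ => ?_) hc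
  rw [lTranslate_single, chainsOn, single_mem_supported_iff]
  exact fun i => hg _ (hσ i)

theorem typeFP_iff {m : ℕ} : TypeFP X S m ↔ ∀ q < m, ∀ k, ∃ l, ∀ z ∈ ripsChains X S q k,
    z ∈ reducedCycles G q → ∃ c ∈ ripsChains X S (q + 1) l, bnd q c = z := by
  have boundsAt_iff (q k l : ℕ) : BoundsAt X S q k l ↔ ∀ z ∈ ripsChains X S q k,
      z ∈ reducedCycles G q → ∃ c ∈ ripsChains X S (q + 1) l, bnd q c = z := by
    simp only [← vrChain_iff]
    cases q <;> rfl
  simp only [TypeFP, boundsAt_iff]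
  refine forall₃_congr fun q _ k => ⟨fun ⟨l, _, h⟩ => ⟨l, h⟩, fun ⟨l, h⟩ => ?_⟩
  refine ⟨max k l, le_max_left k l, fun z hz hz' => ?_⟩
  obtain ⟨c, hc, hcz⟩ := h z hz hz'
  exact ⟨c, ripsChains_mono subset_rfl (le_max_right k l) hc, hcz⟩

theorem exists_list_prod_eq (hX : Subgroup.closure (X : Set G) = ⊤) (g : G) :
    ∃ w : List G, (∀ x ∈ w, x ∈ X ∨ x⁻¹ ∈ X) ∧ w.prod = g := by
  have hg : g ∈ (Subgroup.closure (X : Set G)).toSubmonoid := by rw [hX]; trivial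
  rw [Subgroup.closure_toSubmonoid] at hg
  exact Submonoid.exists_list_of_mem_closure hg

theorem finite_setOf_wordLength_le (hX : Subgroup.closure (X : Set G) = ⊤) (n : ℕ) :
    {g : G | wordLength X g ≤ n}.Finite := by
  let Y := {x : G // x ∈ X ∨ x⁻¹ ∈ X}
  have : Finite Y := X.finite_toSet.union (X.finite_toSet.preimage inv_injective.injOn)
  refine ((List.finite_length_le Y n).image fun w => (w.map Subtype.val).prod).subset
    fun g (hg : wordLength X g ≤ n) => ?_
  obtain ⟨w, hw, hwg⟩ := exists_list_prod_eq hX g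
  obtain ⟨w, hlen, hw, rfl⟩ := Nat.sInf_mem (s := {n : ℕ | ∃ w : List G, w.length = n ∧
    (∀ x ∈ w, x ∈ X ∨ x⁻¹ ∈ X) ∧ w.prod = g}) ⟨_, w, rfl, hw, hwg⟩
  lift w to List Y using hw
  exact ⟨w, (List.length_map _).symm.trans_le (hlen.trans_le hg), rfl⟩

/-- By equivariance only finitely many simplices have to be inspected. -/
theorem Equivariant.exists_finite_displacement (hX : Subgroup.closure (X : Set G) = ⊤) {p q : ℕ}
    {F : Chain G p →ₗ[ℤ] Chain G q} (hF : Equivariant F) (k : ℕ) :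
    ∃ B : Set G, B.Finite ∧ ∀ σ ∈ ripsSimplices X p k, ∀ τ ∈ (F (single σ 1)).support,
      ∀ i j, (σ i)⁻¹ * τ j ∈ B := by
  let A : Set (Fin (p + 1) → G) := {σ | ∀ i, wordLength X (σ i) ≤ k}
  have finite_A : A.Finite := Set.Finite.pi' fun _ => finite_setOf_wordLength_le hX k
  refine ⟨⋃ σ ∈ A, ⋃ τ ∈ (F (single σ 1)).support,
    Set.range fun y : Fin (p + 1) × Fin (q + 1) => (σ y.1)⁻¹ * τ y.2,
    finite_A.biUnion fun σ _ => (F (single σ 1)).support.finite_toSet.biUnion fun τ _ =>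
      Set.finite_range _, fun σ hσ τ hτ i j => ?_⟩
  have hσ' : (σ 0)⁻¹ • σ ∈ A := fun i => hσ 0 i
  have hτ' : (σ 0)⁻¹ • τ ∈ (F (single ((σ 0)⁻¹ • σ) 1)).support := by
    rw [← lTranslate_single, hF]
    exact mem_support_lTranslate_iff.2 hτ
  exact Set.mem_biUnion hσ' (Set.mem_biUnion hτ' ⟨(i, j), by simp⟩)

theorem Equivariant.exists_chainsOfScale_le_comap (hX : Subgroup.closure (X : Set G) = ⊤)
    {p q : ℕ} {F : Chain G p →ₗ[ℤ] Chain G q} (hF : Equivariant F) (k : ℕ) :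
    ∃ l, chainsOfScale X p k ≤ (chainsOfScale X q l).comap F := by
  obtain ⟨B, hB, hBF⟩ := hF.exists_finite_displacement hX k
  obtain ⟨l, hl⟩ := (hB.image2 (fun a b => wordLength X (a⁻¹ * b)) hB).bddAbove
  refine ⟨l, supported_le_comap fun σ hσ τ hτ i j => ?_⟩
  have hij := hl (Set.mem_image2_of_mem (hBF σ hσ τ hτ 0 i) (hBF σ hσ τ hτ 0 j))
  rwa [mul_inv_rev, inv_inv, mul_assoc, mul_inv_cancel_left] at hij

end Scale

/-! ### Equivariant chain maps -/

section ApexCone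

variable {V : Type*} {p q : ℕ}

/-- The homomorphism sending every simplex `σ` to the cone over `F σ` whose apex is the first
vertex of `σ`. Choosing the apex this way keeps it equivariant and inside the vertex sets of
subcomplexes. -/
noncomputable def apexCone (F : Chain V p →ₗ[ℤ] Chain V q) : Chain V p →ₗ[ℤ] Chain V (q + 1) :=
  Finsupp.lift _ ℤ _ fun σ => cone (σ 0) q (F (single σ 1))

theorem apexCone_single (F : Chain V p →ₗ[ℤ] Chain V q) (σ : Fin (p + 1) → V) :
    apexCone F (single σ 1) = cone (σ 0) q (F (single σ 1)) := by
  simp [apexCone]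

theorem bnd_apexCone {F : Chain V p →ₗ[ℤ] Chain V q} (hF : ∀ c, F c ∈ reducedCycles V q)
    (c : Chain V p) : bnd q (apexCone F c) = F c := by
  refine LinearMap.congr_fun (f := bnd q ∘ₗ apexCone F)
    (linearMap_eq_of_forall_single fun σ => ?_) c
  rw [LinearMap.comp_apply, apexCone_single, bnd_cone_of_mem_reducedCycles _ (hF _)]

theorem equivariant_apexCone {F : Chain G p →ₗ[ℤ] Chain G q} (hF : Equivariant F) :
    Equivariant (apexCone F) := by
  refine fun g => LinearMap.congr_fun (f := apexCone F ∘ₗ lTranslate g p)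
    (g := lTranslate g (q + 1) ∘ₗ apexCone F) (linearMap_eq_of_forall_single fun σ => ?_)
  rw [LinearMap.comp_apply, LinearMap.comp_apply, lTranslate_single, apexCone_single,
    apexCone_single, lTranslate_cone, ← hF, lTranslate_single, Pi.smul_apply, smul_eq_mul]

theorem apexCone_mem_chainsOn {X : Finset G} {S : Set G} {k : ℕ}
    {F : Chain G p →ₗ[ℤ] Chain G q} (hF : ripsChains X S p k ≤ (chainsOn S q).comap F) :
    ripsChains X S p k ≤ (chainsOn S (q + 1)).comap (apexCone F) := by
  refine ripsChains_le_comap fun σ hσ => ?_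
  rw [apexCone_single]
  exact cone_mem_chainsOn ((single_mem_ripsChains.1 hσ).1 0) (hF hσ)

end ApexCone

/-- `φ` is an endomorphism over the identity of `ℤ` of the augmented complex of all chains on `G`,
as a complex of `ℤG`-modules. Unlike in `IsChainEndo`, neither scale nor degree is bounded. -/
structure IsEquivariantChainMap (φ : ∀ q, Module.End ℤ (Chain G q)) : Prop where
  equivariant : ∀ q, Equivariant (φ q)
  aug_apply : ∀ c, aug (φ 0 c) = aug c
  bnd_apply : ∀ q c, bnd q (φ (q + 1) c) = φ q (bnd q c)

/-- The defect of the cone homotopy between the identity and `φ`: it is defined so that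
`apexCone (homotopyDefect φ q)` is the degree `q` component of a chain homotopy. -/
noncomputable def homotopyDefect {V : Type*} (φ : ∀ q, Module.End ℤ (Chain V q)) :
    ∀ q, Module.End ℤ (Chain V q)
  | 0 => φ 0 - LinearMap.id
  | q + 1 => φ (q + 1) - LinearMap.id - apexCone (homotopyDefect φ q) ∘ₗ bnd q

theorem homotopyDefect_apply_of_mem_reducedCycles {V : Type*}
    (φ : ∀ q, Module.End ℤ (Chain V q)) {q : ℕ} {z : Chain V q} (hz : z ∈ reducedCycles V q) :
    homotopyDefect φ q z = φ q z - z := by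
  cases q with
  | zero => rfl
  | succ q =>
    have bnd_z : bnd q z = 0 := hz
    simp only [homotopyDefect, LinearMap.sub_apply, LinearMap.comp_apply, LinearMap.id_apply,
      bnd_z, map_zero, sub_zero]

theorem homotopyDefect_mem_chainsOn {X : Finset G} {S : Set G}
    {φ : ∀ q, Module.End ℤ (Chain G q)} {q k : ℕ}
    (hφ : ∀ p ≤ q, ripsChains X S p k ≤ (chainsOn S p).comap (φ p)) :
    ripsChains X S q k ≤ (chainsOn S q).comap (homotopyDefect φ q) := by
  induction q with
  | zero =>
    intro c hc
    change φ 0 c - c ∈ chainsOn S 0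
    exact sub_mem (hφ 0 le_rfl hc) hc.1
  | succ q ih =>
    intro c hc
    change φ (q + 1) c - c - apexCone (homotopyDefect φ q) (bnd q c) ∈ chainsOn S (q + 1)
    exact sub_mem (sub_mem (hφ (q + 1) le_rfl hc) hc.1)
      (apexCone_mem_chainsOn (ih fun p hp => hφ p (hp.trans q.le_succ)) (bnd_mem_ripsChains hc))

namespace IsEquivariantChainMap

variable {φ ψ : ∀ q, Module.End ℤ (Chain G q)}

theorem mul (hφ : IsEquivariantChainMap φ) (hψ : IsEquivariantChainMap ψ) :
    IsEquivariantChainMap (φ * ψ) where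
  equivariant q := (hφ.equivariant q).comp (hψ.equivariant q)
  aug_apply c := (hφ.aug_apply _).trans (hψ.aug_apply c)
  bnd_apply q c := (hφ.bnd_apply q _).trans (congrArg (φ q) (hψ.bnd_apply q c))

theorem pow (hφ : IsEquivariantChainMap φ) (n : ℕ) : IsEquivariantChainMap (φ ^ n) := by
  induction n with
  | zero => exact ⟨fun _ => equivariant_id, fun _ => rfl, fun _ _ => rfl⟩
  | succ n ih => exact pow_succ φ n ▸ ih.mul hφ

theorem apply_mem_reducedCycles (hφ : IsEquivariantChainMap φ) {q : ℕ} {z : Chain G q}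
    (hz : z ∈ reducedCycles G q) : φ q z ∈ reducedCycles G q := by
  cases q with
  | zero => exact (hφ.aug_apply z).trans hz
  | succ q =>
    have bnd_z : bnd q z = 0 := hz
    change bnd q _ = 0
    rw [hφ.bnd_apply, bnd_z, map_zero]

theorem equivariant_homotopyDefect (hφ : IsEquivariantChainMap φ) (q : ℕ) :
    Equivariant (homotopyDefect φ q) := by
  induction q with
  | zero => exact (hφ.equivariant 0).sub equivariant_id
  | succ q ih =>
    exact ((hφ.equivariant (q + 1)).sub equivariant_id).sub
      ((equivariant_apexCone ih).comp (equivariant_bnd q))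

theorem homotopyDefect_mem_reducedCycles (hφ : IsEquivariantChainMap φ) (q : ℕ) (c : Chain G q) :
    homotopyDefect φ q c ∈ reducedCycles G q := by
  induction q with
  | zero =>
    change aug (φ 0 c - c) = 0
    rw [map_sub, hφ.aug_apply, sub_self]
  | succ q ih =>
    change bnd q (φ (q + 1) c - c - apexCone (homotopyDefect φ q) (bnd q c)) = 0
    rw [map_sub, map_sub, hφ.bnd_apply, bnd_apexCone ih,
      homotopyDefect_apply_of_mem_reducedCycles φ (bnd_mem_reducedCycles c), sub_self]

theorem exists_bnd_eq_apply_sub (hφ : IsEquivariantChainMap φ) {X : Finset G}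
    (hX : Subgroup.closure (X : Set G) = ⊤) (q k : ℕ) :
    ∃ l, ∀ S : Set G, (∀ p ≤ q, ripsChains X S p k ≤ (chainsOn S p).comap (φ p)) →
      ∀ z ∈ ripsChains X S q k, z ∈ reducedCycles G q →
        ∃ c ∈ ripsChains X S (q + 1) l, bnd q c = φ q z - z := by
  have hequiv := equivariant_apexCone (hφ.equivariant_homotopyDefect q)
  obtain ⟨l, hl⟩ := hequiv.exists_chainsOfScale_le_comap hX k
  refine ⟨l, fun S hS z hz hz' => ⟨apexCone (homotopyDefect φ q) z,
    ⟨apexCone_mem_chainsOn (homotopyDefect_mem_chainsOn hS) hz, hl hz.2⟩, ?_⟩⟩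
  rw [bnd_apexCone (hφ.homotopyDefect_mem_reducedCycles q),
    homotopyDefect_apply_of_mem_reducedCycles φ hz']

theorem exists_bnd_eq_pow_apply_sub (hφ : IsEquivariantChainMap φ) {X : Finset G}
    (hX : Subgroup.closure (X : Set G) = ⊤) (q k : ℕ) :
    ∃ l, ∀ S : Set G, (∀ p ≤ q, ripsChains X S p k ≤ (ripsChains X S p k).comap (φ p)) →
      ∀ z ∈ ripsChains X S q k, z ∈ reducedCycles G q → ∀ n : ℕ,
        ∃ c ∈ ripsChains X S (q + 1) l, bnd q c = (φ q ^ n) z - z := by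
  obtain ⟨l, hl⟩ := hφ.exists_bnd_eq_apply_sub hX q k
  refine ⟨l, fun S hS z hz hz' n => ?_⟩
  have pow_mem (i : ℕ) : (φ q ^ i) z ∈ ripsChains X S q k ⊓ reducedCycles G q := by
    induction i with
    | zero => exact ⟨hz, hz'⟩
    | succ i ih =>
      rw [pow_succ']
      exact ⟨hS q le_rfl ih.1, hφ.apply_mem_reducedCycles ih.2⟩
  -- A filling of `φ w - w` for `w = z + φ z + ⋯ + φ ^ (n - 1) z` has the desired boundary, so
  -- its scale does not depend on `n`.
  have sum_mem := Submodule.sum_mem _ fun i (_ : i ∈ Finset.range n) => pow_mem i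
  obtain ⟨c, hc, hcz⟩ := hl S (fun p hp => (hS p hp).trans fun _ h => h.1) _ sum_mem.1 sum_mem.2
  refine ⟨c, hc, hcz.trans ?_⟩
  simpa [LinearMap.sum_apply] using LinearMap.congr_fun (mul_geom_sum (φ q) n) z

end IsEquivariantChainMap

/-! ### Characters and half spaces -/

/-- The half space `{χ ≥ r}`. -/
def halfSpace {V : Type*} (χ : V → ℝ) (r : ℝ) : Set V := {g | r ≤ χ g}

theorem halfSpace_anti {V : Type*} {χ : V → ℝ} {r s : ℝ} (hrs : r ≤ s) :
    halfSpace χ s ⊆ halfSpace χ r :=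
  fun _ hg => hrs.trans hg

section Character

variable {X : Finset G} {χ : G → ℝ}

theorem IsCharacter.map_inv (hχ : IsCharacter χ) (g : G) : χ g⁻¹ = -χ g := by
  simpa using map_neg (AddMonoidHom.mk' (fun x : Additive G => χ x.toMul) fun x y => hχ _ _)
    (Additive.ofMul g)

theorem IsCharacter.map_zpow (hχ : IsCharacter χ) (g : G) (n : ℤ) : χ (g ^ n) = n * χ g := by
  simpa using map_zsmul (AddMonoidHom.mk' (fun x : Additive G => χ x.toMul) fun x y => hχ _ _) n
    (Additive.ofMul g)

theorem IsCharacter.exists_pos (hχ : IsCharacter χ) (hne : χ ≠ 0) : ∃ g, 0 < χ g := by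
  obtain ⟨g, hg⟩ := Function.ne_iff.1 hne
  rcases lt_or_gt_of_ne hg with hg | hg
  · exact ⟨g⁻¹, by rw [hχ.map_inv]; exact neg_pos.2 hg⟩
  · exact ⟨g, hg⟩

theorem IsCharacter.exists_le (hχ : IsCharacter χ) (hne : χ ≠ 0) (r : ℝ) : ∃ g, r ≤ χ g := by
  obtain ⟨g, hg⟩ := hχ.exists_pos hne
  refine ⟨g ^ ⌈r / χ g⌉, ?_⟩
  rw [hχ.map_zpow, ← div_le_iff₀ hg]
  exact Int.le_ceil _

theorem IsCharacter.lTranslate_mem_ripsChains (hχ : IsCharacter χ) (g : G) {q k : ℕ} {r : ℝ}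
    {c : Chain G q} (hc : c ∈ ripsChains X (halfSpace χ r) q k) :
    lTranslate g q c ∈ ripsChains X (halfSpace χ (χ g + r)) q k := by
  refine ⟨lTranslate_mem_chainsOn (fun s hs => ?_) hc.1, lTranslate_mem_chainsOfScale g hc.2⟩
  change χ g + r ≤ χ (g * s)
  rw [hχ]
  exact add_le_add_right hs _

theorem exists_mem_ripsChains_halfSpace (χ : G → ℝ) {q k : ℕ} {c : Chain G q}
    (hc : c ∈ chainsOfScale X q k) : ∃ r, c ∈ ripsChains X (halfSpace χ r) q k := by
  obtain ⟨r, hr⟩ := (c.support.finite_toSet.biUnion fun σ _ =>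
    Set.finite_range fun i => χ (σ i)).bddBelow
  exact ⟨r, fun σ hσ i => hr (Set.mem_biUnion hσ ⟨i, rfl⟩), hc⟩

end Character

/-- `F` maps chains of scale `k` to chains of scale `κ` and raises their `χ`-value by at least
`a`. -/
def Raises (X : Finset G) (χ : G → ℝ) (k κ : ℕ) (a : ℝ) {p q : ℕ}
    (F : Chain G p →ₗ[ℤ] Chain G q) : Prop :=
  ∀ r, ripsChains X (halfSpace χ r) p k ≤ (ripsChains X (halfSpace χ (r + a)) q κ).comap F

section Raises

variable {X : Finset G} {χ : G → ℝ} {p q k l κ μ : ℕ} {a b : ℝ} {F : Chain G p →ₗ[ℤ] Chain G q}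

theorem Raises.mono (hF : Raises X χ k κ a F) (hκ : κ ≤ μ) (hba : b ≤ a) :
    Raises X χ k μ b F :=
  fun r _ hc => ripsChains_mono (halfSpace_anti (add_le_add_right hba r)) hκ (hF r hc)

theorem Raises.comp {p' : ℕ} {F' : Chain G p' →ₗ[ℤ] Chain G p} (hF : Raises X χ κ μ a F)
    (hF' : Raises X χ k κ b F') : Raises X χ k μ (b + a) (F ∘ₗ F') := fun r _ hc => by
  rw [← add_assoc]
  exact hF _ (hF' r hc)

theorem Raises.pow {F : Module.End ℤ (Chain G q)} (hF : Raises X χ κ κ a F) (n : ℕ) :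
    Raises X χ κ κ (n * a) (F ^ n) := by
  induction n with
  | zero => intro r c hc; simpa using hc
  | succ n ih =>
    rw [pow_succ, Nat.cast_succ, add_one_mul, add_comm]
    exact ih.comp hF

theorem Raises.chainsOfScale_le_comap (hF : Raises X χ k κ a F) :
    chainsOfScale X p k ≤ (chainsOfScale X q κ).comap F := fun _ hc => by
  obtain ⟨r, hr⟩ := exists_mem_ripsChains_halfSpace χ hc
  exact (hF r hr).2

theorem raises_iff (hχ : IsCharacter χ) : Raises X χ k κ a F ↔
    chainsOfScale X p k ≤ (chainsOfScale X q κ).comap F ∧ ∀ σ ∈ ripsSimplices X p k,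
      ∀ τ ∈ (F (single σ 1)).support, ∀ j, ∃ i, a ≤ χ ((σ i)⁻¹ * τ j) := by
  refine ⟨fun hF => ⟨hF.chainsOfScale_le_comap, fun σ hσ τ hτ j => ?_⟩,
    fun ⟨hscale, hF⟩ r => ripsChains_le_comap fun σ hσ => ⟨fun τ hτ j => ?_, hscale hσ.2⟩⟩
  · obtain ⟨i, hi⟩ := Finite.exists_min fun i => χ (σ i)
    refine ⟨i, ?_⟩
    have raised := (hF (χ (σ i)) (single_mem_ripsChains.2 ⟨hi, hσ⟩)).1 hτ j
    rw [hχ, hχ.map_inv]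
    linarith [show χ (σ i) + a ≤ χ (τ j) from raised]
  · rw [single_mem_ripsChains] at hσ
    obtain ⟨i, hi⟩ := hF σ hσ.2 τ hτ j
    rw [hχ, hχ.map_inv] at hi
    change r + a ≤ χ (τ j)
    linarith [show r ≤ χ (σ i) from hσ.1 i]

theorem Equivariant.eventually_raises (hX : Subgroup.closure (X : Set G) = ⊤)
    (hχ : IsCharacter χ) (hF : Equivariant F)
    (hscale : chainsOfScale X p k ≤ (chainsOfScale X q κ).comap F) :
    ∀ᶠ b in Filter.atBot, Raises X χ k κ b F := by
  obtain ⟨B, finite_B, hB⟩ := hF.exists_finite_displacement hX k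
  obtain ⟨b₀, hb₀⟩ := (finite_B.image χ).bddBelow
  filter_upwards [Filter.eventually_le_atBot b₀] with b hb
  exact (raises_iff hχ).2 ⟨hscale, fun σ hσ τ hτ j =>
    ⟨0, hb.trans (hb₀ (Set.mem_image_of_mem χ (hB σ hσ τ hτ 0 j)))⟩⟩

open Topology in
theorem Raises.eventually_nhds (hX : Subgroup.closure (X : Set G) = ⊤) (hχ : IsCharacter χ)
    (hF : Equivariant F) (hraises : Raises X χ k κ a F) (hba : b < a) :
    ∀ᶠ χ' in 𝓝 χ, IsCharacter χ' → Raises X χ' k κ b F := by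
  obtain ⟨B, finite_B, hB⟩ := hF.exists_finite_displacement hX k
  have near : ∀ᶠ χ' in 𝓝 χ, ∀ g ∈ B, a ≤ χ g → b ≤ χ' g := by
    rw [Filter.eventually_all_finite finite_B]
    exact fun g _ => Filter.eventually_imp_distrib_left.2 fun hg =>
      ((continuous_apply g).tendsto χ).eventually_const_le (hba.trans_le hg)
  rw [raises_iff hχ] at hraises
  filter_upwards [near] with χ' hχ'_near hχ'
  refine (raises_iff hχ').2 ⟨hraises.1, fun σ hσ τ hτ j => ?_⟩
  obtain ⟨i, hi⟩ := hraises.2 σ hσ τ hτ j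
  exact ⟨i, hχ'_near _ (hB σ hσ τ hτ i j) hi⟩

end Raises

/-! ### Filling cycles in half spaces -/

/-- Every reduced `q`-cycle of scale `k` in a half space `{χ ≥ r}` bounds a chain of scale `l` in
`{χ ≥ r - D}`. The loss `D` and the scale `l` do not depend on `r`. -/
def FillsWithLoss (X : Finset G) (χ : G → ℝ) (D : ℝ) (q k l : ℕ) : Prop :=
  ∀ r, ∀ z ∈ ripsChains X (halfSpace χ r) q k, z ∈ reducedCycles G q →
    ∃ c ∈ ripsChains X (halfSpace χ (r - D)) (q + 1) l, bnd q c = z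

section Filling

variable {X : Finset G} {χ : G → ℝ} {m : ℕ}

theorem IsCharacter.exists_fillsWithLoss (hχ : IsCharacter χ) (hne : χ ≠ 0)
    (hFP : TypeFP X {g | 0 ≤ χ g} m) :
    ∃ D, 0 ≤ D ∧ ∀ q < m, ∀ k, ∃ l, FillsWithLoss X χ D q k l := by
  obtain ⟨t, ht⟩ := hχ.exists_pos hne
  refine ⟨χ t, ht.le, fun q hq k => ?_⟩
  obtain ⟨l, hl⟩ := typeFP_iff.1 hFP q hq k
  refine ⟨l, fun r z hz hz' => ?_⟩
  obtain ⟨g, g_le, lt_g⟩ : ∃ g, χ g ≤ r ∧ r - χ t < χ g := by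
    refine ⟨t ^ ⌊r / χ t⌋, ?_, ?_⟩ <;> rw [hχ.map_zpow]
    · exact (le_div_iff₀ ht).1 (Int.floor_le _)
    · linarith [(div_lt_iff₀ ht).1 (Int.lt_floor_add_one (r / χ t))]
  have translated_mem : lTranslate g⁻¹ q z ∈ ripsChains X {g | 0 ≤ χ g} q k := by
    refine ripsChains_mono (halfSpace_anti ?_) le_rfl (hχ.lTranslate_mem_ripsChains g⁻¹ hz)
    rw [hχ.map_inv]
    linarith
  obtain ⟨c, hc, hcz⟩ := hl _ translated_mem (lTranslate_mem_reducedCycles _ hz')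
  refine ⟨lTranslate g (q + 1) c, ripsChains_mono (halfSpace_anti ?_) le_rfl
    (hχ.lTranslate_mem_ripsChains (r := 0) g hc), ?_⟩
  · linarith
  · rw [equivariant_bnd, hcz, ← lTranslate_mul, mul_inv_cancel, lTranslate_one]

theorem typeFP_univ_of_fillsWithLoss {D : ℝ} (h : ∀ q < m, ∀ k, ∃ l, FillsWithLoss X χ D q k l) :
    TypeFP X Set.univ m := by
  refine typeFP_iff.2 fun q hq k => ?_
  obtain ⟨l, hl⟩ := h q hq k
  refine ⟨l, fun z hz hz' => ?_⟩
  obtain ⟨r, hr⟩ := exists_mem_ripsChains_halfSpace χ hz.2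
  obtain ⟨c, hc, hcz⟩ := hl r z hr hz'
  exact ⟨c, ripsChains_mono (Set.subset_univ _) le_rfl hc, hcz⟩

end Filling

/-! ### Constructing chain maps that raise a character -/

section Construction

variable {X : Finset G} {χ : G → ℝ} {q k κ l m : ℕ}

/-- Right translation of vertices. -/
noncomputable def rTranslate (t : G) : Module.End ℤ (Chain G 0) :=
  lmapDomain ℤ ℤ fun σ i => σ i * t

theorem rTranslate_single (t : G) (σ : Fin 1 → G) :
    rTranslate t (single σ 1) = single (fun i => σ i * t) 1 := by
  rw [rTranslate, lmapDomain_apply, mapDomain_single]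

theorem equivariant_rTranslate (t : G) : Equivariant (rTranslate t) := by
  refine fun g => LinearMap.congr_fun (f := rTranslate t ∘ₗ lTranslate g 0)
    (g := lTranslate g 0 ∘ₗ rTranslate t) (linearMap_eq_of_forall_single fun σ => ?_)
  simp only [LinearMap.comp_apply, lTranslate_single, rTranslate_single]
  congr 1
  ext i
  exact mul_assoc g (σ i) t

theorem aug_rTranslate (t : G) (c : Chain G 0) : aug (rTranslate t c) = aug c := by
  refine LinearMap.congr_fun (f := aug ∘ₗ rTranslate t)
    (linearMap_eq_of_forall_single fun σ => ?_) c
  rw [LinearMap.comp_apply, rTranslate_single, aug_single, aug_single]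

theorem IsCharacter.raises_rTranslate (hχ : IsCharacter χ) (t : G) :
    Raises X χ k κ (χ t) (rTranslate t) := by
  refine fun r => ripsChains_le_comap fun σ hσ => ?_
  rw [single_mem_ripsChains] at hσ
  rw [rTranslate_single, single_mem_ripsChains]
  refine ⟨fun i => ?_, fun i j => ?_⟩
  · change r + χ t ≤ χ (σ i * t)
    rw [hχ]
    exact add_le_add_left (hσ.1 i) _
  · rw [Subsingleton.elim (α := Fin 1) i j, wordDist_self]
    exact Nat.zero_le κ

theorem Equivariant.exists_lift {F : Module.End ℤ (Chain G q)} (hF : Equivariant F)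
    (hcycles : ∀ z ∈ reducedCycles G q, F z ∈ reducedCycles G q) :
    ∃ F' : Module.End ℤ (Chain G (q + 1)), Equivariant F' ∧ ∀ c, bnd q (F' c) = F (bnd q c) :=
  ⟨apexCone (F ∘ₗ bnd q), equivariant_apexCone (hF.comp (equivariant_bnd q)),
    bnd_apexCone fun c => hcycles _ (bnd_mem_reducedCycles c)⟩

theorem Raises.exists_lift (hχ : IsCharacter χ) {D a : ℝ} (hfill : FillsWithLoss X χ D q κ l)
    {F : Module.End ℤ (Chain G q)} (hF : Equivariant F) (hraises : Raises X χ k κ a F)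
    (hcycles : ∀ z ∈ reducedCycles G q, F z ∈ reducedCycles G q) :
    ∃ F' : Module.End ℤ (Chain G (q + 1)), Equivariant F' ∧ (∀ c, bnd q (F' c) = F (bnd q c)) ∧
      Raises X χ k l (a - D) F' := by
  let Lifts (σ : Fin (q + 2) → G) (c : Chain G (q + 1)) : Prop :=
    bnd q c = F (bnd q (single σ 1)) ∧ ∀ r, single σ 1 ∈ ripsChains X (halfSpace χ r) (q + 1) k →
      c ∈ ripsChains X (halfSpace χ (r + (a - D))) (q + 1) l
  have translate (g σ c) (hc : Lifts σ c) : Lifts (g • σ) (lTranslate g (q + 1) c) := by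
    refine ⟨?_, fun r hσ => ?_⟩
    · rw [equivariant_bnd, hc.1, ← hF, ← equivariant_bnd, lTranslate_single]
    · have hσ' := hχ.lTranslate_mem_ripsChains g⁻¹ hσ
      rw [lTranslate_single, inv_smul_smul] at hσ'
      convert hχ.lTranslate_mem_ripsChains g (hc.2 _ hσ') using 3
      rw [hχ.map_inv]
      ring
  have lift_simplex (σ) : ∃ c, Lifts σ c := by
    have cycle := hcycles _ (bnd_mem_reducedCycles (single σ 1))
    by_cases hσ : σ ∈ ripsSimplices X (q + 1) k
    · obtain ⟨i, hi⟩ := Finite.exists_min fun i => χ (σ i)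
      have hbnd := bnd_mem_ripsChains
        (single_mem_ripsChains.2 (⟨hi, hσ⟩ : (∀ j, σ j ∈ halfSpace χ (χ (σ i))) ∧ _))
      obtain ⟨c, hc, hcz⟩ := hfill _ _ (hraises _ hbnd) cycle
      refine ⟨c, hcz, fun r hr => ripsChains_mono (halfSpace_anti ?_) le_rfl hc⟩
      linarith [show r ≤ χ (σ i) from (single_mem_ripsChains.1 hr).1 i]
    · exact ⟨cone 1 q _, bnd_cone_of_mem_reducedCycles 1 cycle,
        fun r hr => absurd (single_mem_ripsChains.1 hr).2 hσ⟩
  obtain ⟨F', hF', lifts⟩ := exists_equivariant_forall_single translate lift_simplex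
  exact ⟨F', hF', LinearMap.congr_fun (f := bnd q ∘ₗ F') (g := F ∘ₗ bnd q)
    (linearMap_eq_of_forall_single fun σ => (lifts σ).1),
    fun r => ripsChains_le_comap fun σ hσ => (lifts σ).2 r hσ⟩

theorem exists_seq_of_forall_exists_succ {α : ℕ → Type*} {R : ∀ n, α n → α (n + 1) → Prop}
    (a : α 0) (h : ∀ n x, ∃ y, R n x y) : ∃ f : ∀ n, α n, f 0 = a ∧ ∀ n, R n (f n) (f (n + 1)) := by
  choose extend hextend using h
  exact ⟨fun n => Nat.rec a extend n, rfl, fun n => hextend n _⟩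

theorem IsCharacter.exists_chainMap_of_fillsWithLoss (hχ : IsCharacter χ) {D : ℝ} {κ : ℕ → ℕ}
    (hfill : ∀ q < m, FillsWithLoss X χ D q (κ q) (κ (q + 1))) (t : G) (k : ℕ) :
    ∃ φ, IsEquivariantChainMap φ ∧ ∀ q ≤ m, Raises X χ k (κ q) (χ t - q * D) (φ q) := by
  let α (q : ℕ) := {F : Module.End ℤ (Chain G q) // Equivariant F ∧
    (∀ z ∈ reducedCycles G q, F z ∈ reducedCycles G q) ∧
    (q ≤ m → Raises X χ k (κ q) (χ t - q * D) F)}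
  have start : Equivariant (rTranslate t) ∧
      (∀ z ∈ reducedCycles G 0, rTranslate t z ∈ reducedCycles G 0) ∧
      (0 ≤ m → Raises X χ k (κ 0) (χ t - (0 : ℕ) * D) (rTranslate t)) :=
    ⟨equivariant_rTranslate t, fun z hz => (aug_rTranslate t z).trans hz, fun _ => by
      simpa using hχ.raises_rTranslate t⟩
  have preserves_cycles {q : ℕ} {F : Module.End ℤ (Chain G q)}
      {F' : Module.End ℤ (Chain G (q + 1))} (hbnd : ∀ c, bnd q (F' c) = F (bnd q c)) :
      ∀ z ∈ reducedCycles G (q + 1), F' z ∈ reducedCycles G (q + 1) := fun z hz =>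
    (hbnd z).trans (by rw [show bnd q z = 0 from hz, map_zero])
  have extend (q) (F : α q) : ∃ F' : α (q + 1), ∀ c, bnd q (F'.1 c) = F.1 (bnd q c) := by
    obtain ⟨F, hF, hcycles, hraises⟩ := F
    by_cases hq : q < m
    · obtain ⟨F', hF', hbnd, hraises'⟩ := (hraises hq.le).exists_lift hχ (hfill q hq) hF hcycles
      refine ⟨⟨F', hF', preserves_cycles hbnd, fun _ => ?_⟩, hbnd⟩
      convert hraises' using 1
      push_cast
      ring
    · obtain ⟨F', hF', hbnd⟩ := hF.exists_lift hcycles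
      exact ⟨⟨F', hF', preserves_cycles hbnd, fun h => absurd h hq⟩, hbnd⟩
  obtain ⟨φ, hφ₀, hφ⟩ := exists_seq_of_forall_exists_succ (⟨rTranslate t, start⟩ : α 0) extend
  exact ⟨fun q => (φ q).1, ⟨fun q => (φ q).2.1, fun c => by rw [hφ₀, aug_rTranslate], hφ⟩,
    fun q => (φ q).2.2.2⟩

theorem IsCharacter.exists_scale_forall_exists_chainMap (hχ : IsCharacter χ) {D : ℝ} (hD : 0 ≤ D)
    (hfill : ∀ q < m, ∀ k, ∃ l, FillsWithLoss X χ D q k l) :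
    ∃ κ, ∀ (t : G) (k : ℕ), ∃ φ, IsEquivariantChainMap φ ∧
      ∀ q ≤ m, Raises X χ k κ (χ t - m * D) (φ q) := by
  have extend (q k : ℕ) : ∃ l, k ≤ l ∧ (q < m → FillsWithLoss X χ D q k l) := by
    by_cases hq : q < m
    · obtain ⟨l, hl⟩ := hfill q hq k
      refine ⟨max k l, le_max_left k l, fun _ r z hz hz' => ?_⟩
      obtain ⟨c, hc, hcz⟩ := hl r z hz hz'
      exact ⟨c, ripsChains_mono subset_rfl (le_max_right k l) hc, hcz⟩
    · exact ⟨k, le_rfl, fun h => absurd h hq⟩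
  obtain ⟨κ, -, hκ⟩ := exists_seq_of_forall_exists_succ (α := fun _ => ℕ) 0 extend
  refine ⟨κ m, fun t k => ?_⟩
  obtain ⟨φ, hφ, hraises⟩ :=
    hχ.exists_chainMap_of_fillsWithLoss (fun q hq => (hκ q).2 hq) t k
  refine ⟨φ, hφ, fun q hq =>
    (hraises q hq).mono (monotone_nat_of_le_succ (fun n => (hκ n).1) hq) ?_⟩
  gcongr

end Construction

/-! ### A criterion for membership in the invariant -/

section Criterion

variable {X : Finset G} {χ : G → ℝ} {m κ : ℕ} {a : ℝ} {φ : ∀ q, Module.End ℤ (Chain G q)}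

theorem IsEquivariantChainMap.exists_raises_zero (hφ : IsEquivariantChainMap φ)
    (hX : Subgroup.closure (X : Set G) = ⊤) (hχ : IsCharacter χ) (ha : 0 < a)
    (hraises : ∀ q ≤ m, Raises X χ κ κ a (φ q)) {ψ : ∀ q, Module.End ℤ (Chain G q)}
    (hψ : IsEquivariantChainMap ψ) {k : ℕ}
    (hscale : ∀ q ≤ m, chainsOfScale X q k ≤ (chainsOfScale X q κ).comap (ψ q)) :
    ∃ Φ, IsEquivariantChainMap Φ ∧ ∀ q ≤ m, Raises X χ k κ 0 (Φ q) := by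
  have lowers : ∀ᶠ b in Filter.atBot, ∀ q ≤ m, Raises X χ k κ b (ψ q) :=
    (Filter.eventually_all_finite (Set.finite_Iic m)).2 fun q hq =>
      (hψ.equivariant q).eventually_raises hX hχ (hscale q hq)
  obtain ⟨b, hb⟩ := lowers.exists
  obtain ⟨n, hn⟩ := exists_nat_ge (-b / a)
  refine ⟨φ ^ n * ψ, (hφ.pow n).mul hψ, fun q hq =>
    (((hraises q hq).pow n).comp (hb q hq)).mono le_rfl ?_⟩
  linarith [(div_le_iff₀ ha).1 hn]

theorem Raises.exists_pow_apply_mem {q : ℕ} {F : Module.End ℤ (Chain G q)} (ha : 0 < a)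
    (hF : Raises X χ κ κ a F) (r : ℝ) {c : Chain G q} (hc : c ∈ chainsOfScale X q κ) :
    ∃ n : ℕ, (F ^ n) c ∈ ripsChains X (halfSpace χ r) q κ := by
  obtain ⟨s, hs⟩ := exists_mem_ripsChains_halfSpace χ hc
  obtain ⟨n, hn⟩ := exists_nat_ge ((r - s) / a)
  refine ⟨n, ripsChains_mono (halfSpace_anti ?_) le_rfl (hF.pow n s hs)⟩
  linarith [(div_le_iff₀ ha).1 hn]

theorem IsEquivariantChainMap.exists_bnd_eq_bnd (hφ : IsEquivariantChainMap φ)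
    (hX : Subgroup.closure (X : Set G) = ⊤) (ha : 0 < a)
    (hraises : ∀ q ≤ m, Raises X χ κ κ a (φ q)) {q : ℕ} (hq : q < m) (r : ℝ) :
    ∃ l, ∀ c ∈ chainsOfScale X (q + 1) κ, bnd q c ∈ ripsChains X (halfSpace χ r) q κ →
      ∃ c' ∈ ripsChains X (halfSpace χ r) (q + 1) l, bnd q c' = bnd q c := by
  have preserves (p : ℕ) (hp : p ≤ q) : ripsChains X (halfSpace χ r) p κ ≤
      (ripsChains X (halfSpace χ r) p κ).comap (φ p) := fun c hc =>
    ripsChains_mono (halfSpace_anti (by linarith)) le_rfl (hraises p (hp.trans hq.le) r hc)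
  obtain ⟨l, homotopy⟩ := hφ.exists_bnd_eq_pow_apply_sub hX q κ
  refine ⟨max κ l, fun c hc hz => ?_⟩
  obtain ⟨n, raised⟩ := (hraises (q + 1) hq).exists_pow_apply_mem ha r hc
  have bnd_raised : bnd q ((φ (q + 1) ^ n) c) = (φ q ^ n) (bnd q c) := (hφ.pow n).bnd_apply q c
  obtain ⟨e, he, bnd_e⟩ := homotopy _ preserves _ hz (bnd_mem_reducedCycles c) n
  refine ⟨(φ (q + 1) ^ n) c - e, sub_mem (ripsChains_mono subset_rfl (le_max_left κ l) raised)
    (ripsChains_mono subset_rfl (le_max_right κ l) he), ?_⟩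
  rw [map_sub, bnd_raised, bnd_e, sub_sub_cancel]

theorem IsEquivariantChainMap.typeFP_halfSpace (hφ : IsEquivariantChainMap φ)
    (hX : Subgroup.closure (X : Set G) = ⊤) (hχ : IsCharacter χ) (hFP : TypeFP X Set.univ m)
    (ha : 0 < a) (hraises : ∀ q ≤ m, Raises X χ κ κ a (φ q))
    (hscale : ∀ k, ∃ ψ, IsEquivariantChainMap ψ ∧
      ∀ q ≤ m, chainsOfScale X q k ≤ (chainsOfScale X q κ).comap (ψ q)) :
    TypeFP X (halfSpace χ 0) m := by
  refine typeFP_iff.2 fun q hq k => ?_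
  obtain ⟨l₀, fill⟩ := typeFP_iff.1 hFP q hq k
  obtain ⟨ψ, hψ, hψ_scale⟩ := hscale (max k l₀)
  obtain ⟨Φ, hΦ, Φ_raises⟩ := hφ.exists_raises_zero hX hχ ha hraises hψ hψ_scale
  have Φ_mem (p : ℕ) (hp : p ≤ m) : ripsChains X (halfSpace χ 0) p (max k l₀) ≤
      (ripsChains X (halfSpace χ 0) p κ).comap (Φ p) := by
    simpa only [add_zero] using Φ_raises p hp 0
  obtain ⟨l₁, homotopy⟩ := hΦ.exists_bnd_eq_apply_sub hX q (max k l₀)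
  obtain ⟨l₂, push⟩ := hφ.exists_bnd_eq_bnd hX ha hraises hq 0
  refine ⟨max l₁ l₂, fun z hz hz' => ?_⟩
  have hz_max := ripsChains_mono subset_rfl (le_max_left k l₀) hz
  obtain ⟨c, hc, hcz⟩ := fill z (ripsChains_mono (Set.subset_univ _) le_rfl hz) hz'
  have bnd_Φc : bnd q (Φ (q + 1) c) = Φ q z := by rw [hΦ.bnd_apply, hcz]
  have Φc_scale : Φ (q + 1) c ∈ chainsOfScale X (q + 1) κ :=
    (Φ_raises (q + 1) hq).chainsOfScale_le_comap (chainsOfScale_mono (le_max_right k l₀) hc.2)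
  obtain ⟨e, he, bnd_e⟩ := homotopy (halfSpace χ 0)
    (fun p hp c hc => (Φ_mem p (hp.trans hq.le) hc).1) z hz_max hz'
  obtain ⟨c', hc', bnd_c'⟩ := push _ Φc_scale (bnd_Φc ▸ Φ_mem q hq.le hz_max)
  refine ⟨c' - e, sub_mem (ripsChains_mono subset_rfl (le_max_right l₁ l₂) hc')
    (ripsChains_mono subset_rfl (le_max_left l₁ l₂) he), ?_⟩
  rw [map_sub, bnd_c', bnd_Φc, bnd_e, sub_sub_cancel]

open Topology in
theorem IsCharacter.eventually_typeFP_halfSpace (hX : Subgroup.closure (X : Set G) = ⊤)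
    (hχ : IsCharacter χ) (hne : χ ≠ 0) (hFP : TypeFP X (halfSpace χ 0) m) :
    ∀ᶠ χ' in 𝓝 χ, IsCharacter χ' → TypeFP X (halfSpace χ' 0) m := by
  obtain ⟨D, hD, hfill⟩ := hχ.exists_fillsWithLoss hne hFP
  obtain ⟨κ, hκ⟩ := hχ.exists_scale_forall_exists_chainMap hD hfill
  obtain ⟨t, ht⟩ := hχ.exists_le hne (m * D + 2)
  obtain ⟨φ, hφ, hraises⟩ := hκ t κ
  have near : ∀ᶠ χ' in 𝓝 χ, ∀ q ≤ m, IsCharacter χ' → Raises X χ' κ κ 1 (φ q) :=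
    (Filter.eventually_all_finite (Set.finite_Iic m)).2 fun q hq =>
      (hraises q hq).eventually_nhds hX hχ (hφ.equivariant q) (by linarith)
  filter_upwards [near] with χ' hχ'_near hχ'
  refine hφ.typeFP_halfSpace hX hχ' (typeFP_univ_of_fillsWithLoss hfill) one_pos
    (fun q hq => hχ'_near q hq hχ') fun k => ?_
  obtain ⟨ψ, hψ, hψ_raises⟩ := hκ t k
  exact ⟨ψ, hψ, fun q hq => (hψ_raises q hq).chainsOfScale_le_comap⟩

end Criterion

theorem stmt14_general {G : Type*} [Group G] (X : Finset G)
    (hX : Subgroup.closure (X : Set G) = ⊤) (m : ℕ) :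
    IsOpen {χ : {f : G → ℝ // IsCharacter f} |
      χ.1 ≠ 0 ∧ TypeFP X {g : G | 0 ≤ χ.1 g} m} ∧
    (∀ lam : ℝ, 0 < lam → ∀ χ : G → ℝ,
      (TypeFP X {g : G | 0 ≤ χ g} m ↔ TypeFP X {g : G | 0 ≤ lam * χ g} m)) := by
  refine ⟨isOpen_iff_mem_nhds.2 fun χ ⟨χ_ne_zero, hχ⟩ => ?_, fun lam hlam χ => ?_⟩
  · have restrict := continuous_subtype_val.tendsto χ
    filter_upwards [restrict.eventually_ne χ_ne_zero,
      restrict.eventually (χ.2.eventually_typeFP_halfSpace hX χ_ne_zero hχ)] with χ' hne hFP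
    exact ⟨hne, hFP χ'.2⟩
  · simp only [mul_nonneg_iff_of_pos_left hlam]

/-- For `G` of type `FP_m`, the invariant `Σ^m(G;ℤ)` is an open cone in `Hom(G,ℝ)`: its set
of nonzero members is open in the topology of pointwise convergence, and it is invariant
under scaling by positive reals. -/
theorem stmt14 {G : Type*} [Group G] (X : Finset G)
    (hX : Subgroup.closure (X : Set G) = ⊤) (m : ℕ)
    (hFP : TypeFP X Set.univ m) :
    IsOpen {χ : {f : G → ℝ // IsCharacter f} |
      χ.1 ≠ 0 ∧ TypeFP X {g : G | 0 ≤ χ.1 g} m} ∧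
    (∀ lam : ℝ, 0 < lam → ∀ χ : G → ℝ, IsCharacter χ →
      (TypeFP X {g : G | 0 ≤ χ g} m ↔ TypeFP X {g : G | 0 ≤ lam * χ g} m)) := by
  obtain ⟨isOpen_sigma, scaling⟩ := stmt14_general X hX m
  exact ⟨isOpen_sigma, fun lam hlam χ _ => scaling lam hlam χ⟩
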